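/- Let α > −1 be real, N ≥ 1, M > 0, let (z_n)_{n≥1} be a strictly increasing sequence of positive reals, and let (ρ_n)_{n≥1} be strictly positive reals such that Σ_{n=1}^∞ z_n^k · ρ_n < ∞ for every integer k ≥ 0. For tuples x = (x_1,…,x_N) and y = (y_1,…,y_N), each of pairwise distinct positive reals, define q^M(x,y) := det_{1≤i,j≤N}[ Σ_{n=1}^∞ (2/M²) · (y_j^{α+1} / x_i^α) · J_α(z_n x_i / M) · J_α(z_n y_j / M) · ρ_n ]. Then, as (x, y) tends to ((0,…,0), (0,…,0)) through such tuples, the ratio q^M(x,y) / ( (∏_{k=1}^N y_k^{2α+1}) · Δ(x²) · Δ(y²) ) converges to [ N! · 2^{N(2N+2α−3)} · M^{2N(N+α)} · ∏_{k=1}^N ( Γ(k)² · Γ(k+α)² ) ]^{−1} · Σ_{n∈ℕ^N} ( ∏_{s=1}^N z_{n_s}^{2α} · ρ_{n_s} ) · ( Δ(z_{n_1}², …, z_{n_N}²) )², where the multi-indexed sum over n = (n_1,…,n_N) ∈ ℕ^N is absolutely summable. -/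

import Mathlib

open Filter

/-- The Bessel function of the first kind, for `x > 0`,
`J_α(x) = Σ_{k=0}^∞ (-1)^k (x/2)^{2k+α} / (k! Γ(k+α+1))`. -/
noncomputable def besselJ (α x : ℝ) : ℝ :=
  ∑' k : ℕ, (-1 : ℝ) ^ k * (x / 2) ^ (2 * (k : ℝ) + α) /
    ((Nat.factorial k : ℝ) * Real.Gamma ((k : ℝ) + α + 1))

/-- The Vandermonde product `Δ(x) = ∏_{1 ≤ j < k ≤ N} (x_k - x_j)`. -/
def vandermondeProd {N : ℕ} (x : Fin N → ℝ) : ℝ :=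
  ∏ p ∈ Finset.univ.filter (fun p : Fin N × Fin N => p.1 < p.2), (x p.2 - x p.1)


noncomputable def phi (β t : ℝ) : ℝ :=
  ∑' k : ℕ, (-1/4 : ℝ) ^ k * t ^ k / ((Nat.factorial k : ℝ) * Real.Gamma ((k : ℝ) + β + 1))

lemma gamma_lower (β : ℝ) (hβ : -1 < β) :
    ∃ C : ℝ, 0 < C ∧ ∀ k : ℕ, C ≤ Real.Gamma ((k : ℝ) + β + 1) := by
  refine ⟨min (Real.Gamma (β + 1)) (Real.Gamma (β + 2)), ?_, ?_⟩
  · exact lt_min (Real.Gamma_pos_of_pos (by linarith)) (Real.Gamma_pos_of_pos (by linarith))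
  · intro k
    cases k with
    | zero => simp
    | succ k =>
      refine (min_le_right _ _).trans ?_
      induction k with
      | zero =>
        apply le_of_eq; congr 1; push_cast; ring
      | succ k ih =>
        refine ih.trans ?_
        have hk : (0 : ℝ) ≤ k := Nat.cast_nonneg k
        have : ((k + 1 + 1 : ℕ) : ℝ) + β + 1 = (((k + 1 : ℕ) : ℝ) + β + 1) + 1 := by
          push_cast; ring
        rw [this, Real.Gamma_add_one (s := ((k + 1 : ℕ) : ℝ) + β + 1) (by push_cast; linarith)]
        have hp : 0 < Real.Gamma (((k + 1 : ℕ) : ℝ) + β + 1) :=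
          Real.Gamma_pos_of_pos (by push_cast; linarith)
        have : (1 : ℝ) ≤ ((k + 1 : ℕ) : ℝ) + β + 1 := by push_cast; linarith
        nlinarith

lemma phi_term_bound (β : ℝ) (hβ : -1 < β) :
    ∃ C : ℝ, 0 < C ∧ ∀ (k : ℕ) (t R : ℝ), |t| ≤ R →
      |(-1/4 : ℝ) ^ k * t ^ k / ((Nat.factorial k : ℝ) * Real.Gamma ((k : ℝ) + β + 1))|
        ≤ C * (R ^ k / (Nat.factorial k : ℝ)) := by
  obtain ⟨C, hC, h⟩ := gamma_lower β hβ
  refine ⟨C⁻¹, inv_pos.2 hC, fun k t R ht => ?_⟩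
  have hg := hC.trans_le (h k)
  have hf : (0 : ℝ) < (Nat.factorial k : ℝ) := by positivity
  rw [abs_div, abs_mul, abs_mul, abs_pow, abs_pow, abs_of_pos hf, abs_of_pos hg]
  have h1 : |(-1/4 : ℝ)| ^ k ≤ 1 := pow_le_one₀ (abs_nonneg _) (by norm_num [abs_of_neg])
  have h2 : |t| ^ k ≤ R ^ k := pow_le_pow_left₀ (abs_nonneg _) ht k
  calc |(-1/4 : ℝ)| ^ k * |t| ^ k / ((Nat.factorial k : ℝ) * Real.Gamma ((k : ℝ) + β + 1))
      ≤ 1 * R ^ k / ((Nat.factorial k : ℝ) * C) := by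
        gcongr
        · rw [one_mul]; exact (pow_nonneg (abs_nonneg t) k).trans h2
        · exact h k
    _ = _ := by field_simp

lemma phi_summable (β : ℝ) (hβ : -1 < β) (t : ℝ) :
    Summable fun k : ℕ =>
      (-1/4 : ℝ) ^ k * t ^ k / ((Nat.factorial k : ℝ) * Real.Gamma ((k : ℝ) + β + 1)) := by
  obtain ⟨C, hC, h⟩ := phi_term_bound β hβ
  refine Summable.of_norm_bounded ((Real.summable_pow_div_factorial |t|).mul_left C) ?_
  intro k
  exact h k t |t| le_rfl

lemma phi_zero (β : ℝ) : phi β 0 = (Real.Gamma (β + 1))⁻¹ := by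
  unfold phi
  rw [tsum_eq_single 0]
  · simp
  · intro k hk; simp [hk]

lemma phi_hasDerivAt (β : ℝ) (hβ : -1 < β) (t : ℝ) :
    HasDerivAt (phi β) (-1/4 * phi (β + 1) t) t := by
  obtain ⟨C, hC, h⟩ := phi_term_bound (β + 1) (by linarith)
  let g' : ℕ → ℝ → ℝ := fun k y => (-1/4 : ℝ) ^ k * (k * y ^ (k - 1)) /
    ((Nat.factorial k : ℝ) * Real.Gamma ((k : ℝ) + β + 1))
  have hg'0 : ∀ y, g' 0 y = 0 := by intro y; simp [g']
  have hg's : ∀ k y, g' (k + 1) y = -1/4 * ((-1/4 : ℝ) ^ k * y ^ k /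
      ((Nat.factorial k : ℝ) * Real.Gamma ((k : ℝ) + (β + 1) + 1))) := by
    intro k y
    have e : ((k + 1 : ℕ) : ℝ) + β + 1 = (k : ℝ) + (β + 1) + 1 := by push_cast; ring
    simp only [g', e, Nat.factorial_succ, Nat.add_sub_cancel]
    have hg : Real.Gamma ((k : ℝ) + (β + 1) + 1) ≠ 0 :=
      (Real.Gamma_pos_of_pos (by have : (0:ℝ) ≤ k := Nat.cast_nonneg k
                                 linarith)).ne'
    have hf : ((Nat.factorial k : ℕ) : ℝ) ≠ 0 := by positivity
    have hk : (k : ℝ) + 1 ≠ 0 := by positivity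
    push_cast
    field_simp
    ring
  let R := |t| + 1
  let u : ℕ → ℝ := fun k => if k = 0 then 0 else C * (R ^ (k - 1) / ((k - 1).factorial : ℝ))
  have hu : Summable u := by
    rw [← summable_nat_add_iff 1]
    simpa [u] using (Real.summable_pow_div_factorial R).mul_left C
  have key := hasDerivAt_tsum_of_isPreconnected (g := fun (k : ℕ) (y : ℝ) =>
      (-1/4 : ℝ) ^ k * y ^ k / ((Nat.factorial k : ℝ) * Real.Gamma ((k : ℝ) + β + 1)))
      (g' := g') (t := Metric.ball (0 : ℝ) R) (y₀ := t) (y := t) hu Metric.isOpen_ball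
      (convex_ball _ _).isPreconnected ?_ ?_ (by simp [R]) (phi_summable β hβ t) (by simp [R])
  · have e : -1/4 * phi (β + 1) t = ∑' n, g' n t := ?_
    · rw [e]; exact key
    rw [Summable.tsum_eq_zero_add]
    · rw [hg'0, zero_add]
      simp_rw [hg's]
      rw [tsum_mul_left, phi]
    · rw [← summable_nat_add_iff 1]
      simp_rw [hg's]
      exact (phi_summable (β + 1) (by linarith) t).mul_left _
  · intro k y _
    exact ((hasDerivAt_pow k y).const_mul _).div_const _
  · intro k y hy
    have hy' : |y| ≤ R := by simpa using (Metric.mem_ball.1 hy).le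
    cases k with
    | zero => simp [hg'0, u]
    | succ k =>
      rw [hg's, norm_mul]
      simp only [u, Nat.succ_ne_zero, if_false, Nat.add_sub_cancel]
      have := h k y R hy'
      rw [Real.norm_eq_abs, Real.norm_eq_abs]
      have h4 : |(-1/4 : ℝ)| = 1/4 := by norm_num [abs_of_neg]
      rw [h4]
      have := abs_nonneg ((-1/4 : ℝ) ^ k * y ^ k /
        ((Nat.factorial k : ℝ) * Real.Gamma ((k : ℝ) + (β + 1) + 1)))
      linarith

lemma phi_rec (β : ℝ) (hβ : -1 < β) (t : ℝ) :
    phi β t = (β + 1) * phi (β + 1) t - t / 4 * phi (β + 2) t := by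
  have s0 := phi_summable β hβ t
  have s1 := phi_summable (β + 1) (by linarith) t
  have s2 := phi_summable (β + 2) (by linarith) t
  have key : ∀ k : ℕ, (-1/4 : ℝ) ^ (k+1) * t ^ (k+1) /
      ((Nat.factorial (k+1) : ℝ) * Real.Gamma (((k+1 : ℕ) : ℝ) + β + 1)) =
      (β + 1) * ((-1/4 : ℝ) ^ (k+1) * t ^ (k+1) /
      ((Nat.factorial (k+1) : ℝ) * Real.Gamma (((k+1 : ℕ) : ℝ) + (β + 1) + 1))) -
      t / 4 * ((-1/4 : ℝ) ^ k * t ^ k /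
      ((Nat.factorial k : ℝ) * Real.Gamma ((k : ℝ) + (β + 2) + 1))) := by
    intro k
    have hk0 : (0:ℝ) ≤ k := Nat.cast_nonneg k
    have e1 : ((k + 1 : ℕ) : ℝ) + β + 1 = (k : ℝ) + β + 2 := by push_cast; ring
    have e2 : ((k + 1 : ℕ) : ℝ) + (β + 1) + 1 = ((k : ℝ) + β + 2) + 1 := by push_cast; ring
    have e3 : (k : ℝ) + (β + 2) + 1 = ((k : ℝ) + β + 2) + 1 := by ring
    rw [e1, e2, e3, Real.Gamma_add_one (by linarith), Nat.factorial_succ]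
    have hg : Real.Gamma ((k : ℝ) + β + 2) ≠ 0 := (Real.Gamma_pos_of_pos (by linarith)).ne'
    have hf : ((Nat.factorial k : ℕ) : ℝ) ≠ 0 := by positivity
    have hk : (k : ℝ) + 1 ≠ 0 := by positivity
    have hb : (k : ℝ) + β + 2 ≠ 0 := by linarith
    push_cast
    field_simp
    ring
  unfold phi
  rw [s0.tsum_eq_zero_add, s1.tsum_eq_zero_add, ← tsum_mul_left]
  simp_rw [key]
  rw [Summable.tsum_sub, mul_add, tsum_mul_left, tsum_mul_left]
  · have e : ((0 : ℕ) : ℝ) + (β + 1) + 1 = (β + 1) + 1 := by push_cast; ring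
    have hg : Real.Gamma (β + 1) ≠ 0 := (Real.Gamma_pos_of_pos (by linarith)).ne'
    rw [e, Real.Gamma_add_one (s := β + 1) (by linarith)]
    have : β + 1 ≠ 0 := by linarith
    simp only [Nat.cast_zero, zero_add, pow_zero, Nat.factorial_zero, Nat.cast_one, one_mul]
    field_simp
    ring
  · exact ((summable_nat_add_iff 1).2 s1).mul_left _
  · exact s2.mul_left _

lemma phi_bdd (β : ℝ) (hβ : -1/2 ≤ β) (t : ℝ) (ht : 0 ≤ t) : |phi β t| ≤ |phi β 0| := by
  let E : ℝ → ℝ := fun t => t * phi (β + 1) t ^ 2 / 16 + phi β t ^ 2 / 4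
  have hE : ∀ t, HasDerivAt E (-(2 * β + 1) / 16 * phi (β + 1) t ^ 2) t := by
    intro t
    have h0 := phi_hasDerivAt β (by linarith) t
    have h1 := phi_hasDerivAt (β + 1) (by linarith) t
    have := (((hasDerivAt_id t).mul (h1.pow 2)).div_const 16).add ((h0.pow 2).div_const 4)
    refine this.congr_deriv ?_
    have e : β + 1 + 1 = β + 2 := by ring
    have hr := phi_rec β (by linarith) t
    simp only [e, Pi.pow_apply, id]
    rw [hr]
    ring
  have hanti : AntitoneOn E (Set.Ici 0) := by
    apply antitoneOn_of_deriv_nonpos (convex_Ici 0)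
    · exact fun t _ => (hE t).continuousAt.continuousWithinAt
    · exact fun t _ => (hE t).differentiableAt.differentiableWithinAt
    · intro t _
      rw [(hE t).deriv]
      have := sq_nonneg (phi (β + 1) t)
      nlinarith
  have h := hanti (Set.mem_Ici.2 le_rfl) (Set.mem_Ici.2 ht) ht
  simp only [E] at h
  apply sq_le_sq.1
  have : 0 ≤ t * phi (β + 1) t ^ 2 := by positivity
  linarith

lemma phi_growth (β : ℝ) (hβ : -1 < β) :
    ∃ C : ℝ, 0 < C ∧ ∀ t, 0 ≤ t → |phi β t| ≤ C * (1 + t) := by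
  refine ⟨|phi β 0| + |phi (β + 1) 0| + 1, by positivity, fun t ht => ?_⟩
  have hb : ‖phi β t - phi β 0‖ ≤ |phi (β + 1) 0| * ‖t - 0‖ := by
    apply Convex.norm_image_sub_le_of_norm_hasDerivWithin_le (s := Set.Ici 0)
      (f' := fun t => -1/4 * phi (β + 1) t)
    · exact fun t _ => (phi_hasDerivAt β hβ t).hasDerivWithinAt
    · intro s hs
      have := phi_bdd (β + 1) (by linarith) s hs
      rw [norm_mul, Real.norm_eq_abs, Real.norm_eq_abs]
      have h4 : |(-1/4 : ℝ)| = 1/4 := by norm_num [abs_of_neg]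
      rw [h4]
      have := abs_nonneg (phi (β + 1) s)
      linarith
    · exact convex_Ici 0
    · exact Set.mem_Ici.2 le_rfl
    · exact ht
  rw [Real.norm_eq_abs, Real.norm_eq_abs, sub_zero, abs_of_nonneg ht] at hb
  have := abs_sub_abs_le_abs_sub (phi β t) (phi β 0)
  nlinarith [abs_nonneg (phi β 0), abs_nonneg (phi (β + 1) 0),
    mul_nonneg (abs_nonneg (phi β 0)) ht]

lemma gen_rolle (k : ℕ) : ∀ (g : ℕ → ℝ → ℝ) (_ : ∀ j t, HasDerivAt (g j) (g (j + 1) t) t)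
    (a b : ℝ) (x : Fin (k + 1) → ℝ) (_ : StrictMono x) (_ : ∀ i, x i ∈ Set.Icc a b)
    (_ : ∀ i, g 0 (x i) = 0), ∃ ξ ∈ Set.Icc a b, g k ξ = 0 := by
  induction k with
  | zero => intro g hg a b x hx hm h0; exact ⟨x 0, hm 0, h0 0⟩
  | succ k ih =>
    intro g hg a b x hx hm h0
    have : ∀ i : Fin (k + 1), ∃ c ∈ Set.Ioo (x i.castSucc) (x i.succ), g 1 c = 0 := by
      intro i
      exact exists_hasDerivAt_eq_zero (hx i.castSucc_lt_succ)
        (fun t _ => (hg 0 t).continuousAt.continuousWithinAt)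
        (by rw [h0, h0]) (fun t _ => hg 0 t)
    choose c hc hc0 using this
    exact ih (fun j => g (j + 1)) (fun j t => hg (j + 1) t) a b c
      (Fin.strictMono_iff_lt_succ.2 fun i => (hc i.castSucc).2.trans (by
        have := (hc i.succ).1
        rwa [Fin.succ_castSucc]))
      (fun i => ⟨(hm _).1.trans (hc i).1.le, (hc i).2.le.trans (hm _).2⟩) hc0

lemma gen_rolle' (k : ℕ) (g : ℕ → ℝ → ℝ) (hg : ∀ j t, HasDerivAt (g j) (g (j + 1) t) t)
    (a b : ℝ) (s : Finset ℝ) (hs : s.card = k + 1) (hm : ∀ t ∈ s, t ∈ Set.Icc a b)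
    (h0 : ∀ t ∈ s, g 0 t = 0) : ∃ ξ ∈ Set.Icc a b, g k ξ = 0 :=
  gen_rolle k g hg a b (s.orderEmbOfFin hs) (s.orderEmbOfFin hs).strictMono
    (fun i => hm _ (s.orderEmbOfFin_mem hs i)) (fun i => h0 _ (s.orderEmbOfFin_mem hs i))

/-- Newton matrix. -/
noncomputable def newtonL {N : ℕ} (x : Fin N → ℝ) : Matrix (Fin N) (Fin N) ℝ :=
  Matrix.of fun i k => ∏ l ∈ Finset.univ.filter (fun l => l < k), (x i - x l)

lemma vand_eq {N : ℕ} (x : Fin N → ℝ) : vandermondeProd x =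
    ∏ k : Fin N, ∏ l ∈ Finset.univ.filter (fun l => l < k), (x k - x l) := by
  unfold vandermondeProd
  rw [Finset.prod_filter, ← Finset.univ_product_univ, Finset.prod_product_right]
  refine Finset.prod_congr rfl fun k _ => ?_
  rw [Finset.prod_filter]

lemma vand_eq_det {N : ℕ} (x : Fin N → ℝ) : vandermondeProd x = (Matrix.vandermonde x).det := by
  unfold vandermondeProd
  rw [Matrix.det_vandermonde, Finset.prod_filter, ← Finset.univ_product_univ, Finset.prod_product]
  refine Finset.prod_congr rfl fun k _ => ?_
  rw [← Finset.prod_filter]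
  refine Finset.prod_congr ?_ fun _ _ => rfl
  ext; simp

lemma newtonL_det {N : ℕ} (x : Fin N → ℝ) : (newtonL x).det = vandermondeProd x := by
  rw [vand_eq, Matrix.det_of_isLowerTriangular]
  · rfl
  · intro i k hik
    have hik : i < k := hik
    simp only [newtonL, Matrix.of_apply]
    exact Finset.prod_eq_zero (i := i) (by simp [hik]) (sub_self _)

lemma vand_ne {N : ℕ} (x : Fin N → ℝ) (hx : Function.Injective x) : vandermondeProd x ≠ 0 := by
  rw [vand_eq_det]; exact Matrix.det_vandermonde_ne_zero_iff.2 hx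

open Polynomial in
lemma dd_mean {N : ℕ} (F : ℕ → ℝ → ℝ) (hF : ∀ j t, HasDerivAt (F j) (F (j + 1) t) t)
    (a b : ℝ) (x : Fin N → ℝ) (hx : Function.Injective x) (hm : ∀ i, x i ∈ Set.Icc a b)
    (d : Fin N → ℝ) (hd : ∀ i, ∑ k, newtonL x i k * d k = F 0 (x i)) (k : Fin N) :
    ∃ ξ ∈ Set.Icc a b, d k = F k ξ / (Nat.factorial k : ℝ) := by
  let q : Fin N → ℝ[X] := fun j => ∏ l ∈ Finset.univ.filter (fun l => l < j), (X - C (x l))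
  have hq : ∀ j, (q j).Monic := fun j => monic_prod_of_monic _ _ fun l _ => monic_X_sub_C _
  have hqd : ∀ j : Fin N, (q j).natDegree = j := by
    intro j
    rw [natDegree_prod_of_monic _ _ fun l _ => monic_X_sub_C _]
    simp
    rw [show (Finset.univ.filter fun l => l < j) = Finset.Iio j by ext; simp, Fin.card_Iio]
  let p : ℝ[X] := ∑ j ∈ Finset.univ.filter (fun j => j ≤ k), C (d j) * q j
  have hp : derivative^[(k : ℕ)] p = C ((Nat.factorial k : ℝ) * d k) := by
    have hsum : p = C (d k) * q k + ∑ j ∈ Finset.univ.filter (fun j => j < k), C (d j) * q j := by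
      simp only [p]
      rw [← Finset.sum_erase_add _ _ (a := k) (by simp), add_comm]
      congr 1
      refine Finset.sum_congr ?_ fun _ _ => rfl
      ext j; simp [lt_iff_le_and_ne, and_comm]
    have h2 : derivative^[(k : ℕ)] (∑ j ∈ Finset.univ.filter (fun j => j < k), C (d j) * q j) = 0 := by
      rw [iterate_derivative_sum]
      refine Finset.sum_eq_zero fun j hj => ?_
      rw [iterate_derivative_C_mul, iterate_derivative_eq_zero, mul_zero]
      rw [hqd]; simpa using hj
    rw [hsum, iterate_map_add, h2, add_zero, iterate_derivative_C_mul]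
    have : derivative^[(k : ℕ)] (q k) = C (Nat.factorial k : ℝ) := by
      have hdeg : (derivative^[(k : ℕ)] (q k)).natDegree = 0 := by
        have := natDegree_iterate_derivative (q k) k
        rw [hqd] at this; omega
      rw [eq_C_of_natDegree_eq_zero hdeg, coeff_iterate_derivative]
      have := (hq k).coeff_natDegree
      rw [hqd] at this
      simp [this, Nat.descFactorial_self]
    rw [this, ← C_mul, mul_comm]
  have hpe : ∀ i, i ≤ k → p.eval (x i) = F 0 (x i) := by
    intro i hi
    rw [← hd i]
    simp only [p, eval_finsetSum, eval_mul, eval_C, q, eval_prod, eval_sub, eval_X]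
    rw [Finset.sum_filter]
    refine Finset.sum_congr rfl fun j _ => ?_
    simp only [newtonL, Matrix.of_apply]
    split_ifs with h
    · ring
    · rw [Finset.prod_eq_zero (i := i) (by simp; exact lt_of_le_of_lt hi (not_le.1 h)) (sub_self _), zero_mul]
  obtain ⟨ξ, hξ, h0⟩ := gen_rolle' k (fun j t => F j t - (derivative^[j] p).eval t) (by
      intro j t
      rw [Function.iterate_succ_apply']
      exact (hF j t).sub (Polynomial.hasDerivAt _ t)) a b
      ((Finset.univ.filter (fun j => j ≤ k)).image x)
      (by rw [Finset.card_image_of_injective _ hx]; rw [show (Finset.univ.filter fun l => l ≤ k) = Finset.Iic k by ext; simp, Fin.card_Iic])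
      (by intro t ht; simp only [Finset.mem_image] at ht; obtain ⟨i, _, rfl⟩ := ht; exact hm i)
      (by
        intro t ht
        simp only [Finset.mem_image] at ht; obtain ⟨i, hi, rfl⟩ := ht
        simp [hpe i (by simpa using hi)])
  refine ⟨ξ, hξ, ?_⟩
  rw [hp, eval_C] at h0
  have hf : ((Nat.factorial k : ℕ) : ℝ) ≠ 0 := by positivity
  field_simp
  linarith
lemma hasSum_pi_prod (N : ℕ) : ∀ (f : Fin N → ℕ → ℝ) (_ : ∀ s n, 0 ≤ f s n)
    (_ : ∀ s, Summable (f s)),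
    HasSum (fun n : Fin N → ℕ => ∏ s, f s (n s)) (∏ s, ∑' n, f s n) := by
  induction N with
  | zero =>
    intro f _ _
    simp
  | succ N ih =>
    intro f hf hs
    have h1 := ih (fun s => f s.succ) (fun s n => hf _ n) (fun s => hs _)
    have h0 := (hs 0).hasSum
    have h1' : Summable (fun m : Fin N → ℕ => ∏ s, f s.succ (m s)) := h1.summable
    have p0 : (0 : ℕ → ℝ) ≤ f 0 := fun n => hf 0 n
    have p1 : (0 : (Fin N → ℕ) → ℝ) ≤ (fun m : Fin N → ℕ => ∏ s, f s.succ (m s)) :=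
      fun m => Finset.prod_nonneg fun s _ => hf _ _
    have hsm := Summable.mul_of_nonneg (hs 0) h1' p0 p1
    have h2 := h0.mul h1 hsm
    rw [Fin.prod_univ_succ]
    rw [← (Fin.consEquiv (fun _ : Fin (N + 1) => ℕ)).hasSum_iff]
    have e : ((fun n : Fin (N + 1) → ℕ => ∏ s, f s (n s)) ∘
        (Fin.consEquiv (fun _ : Fin (N + 1) => ℕ))) =
        fun x : ℕ × (Fin N → ℕ) => f 0 x.1 * ∏ s, f s.succ (x.2 s) := by
      funext q
      simp [Fin.prod_univ_succ, Fin.consEquiv]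
    rw [e]
    exact h2

lemma andreief (N : ℕ) (w v : ℕ → ℝ) (hw : ∀ n, 0 ≤ w n) (hv : ∀ n, 0 ≤ v n)
    (hs : ∀ k : ℕ, Summable fun n => w n * v n ^ k) :
    HasSum (fun n : Fin N → ℕ => (∏ s, w (n s)) * (Matrix.vandermonde fun s => v (n s)).det ^ 2)
      ((Nat.factorial N : ℝ) *
        (Matrix.of fun i j : Fin N => ∑' n, w n * v n ^ ((i : ℕ) + (j : ℕ))).det) := by
  have h1 : ∀ σ τ : Equiv.Perm (Fin N), HasSum (fun n : Fin N → ℕ =>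
      ((Equiv.Perm.sign σ : ℤ) : ℝ) * ((Equiv.Perm.sign τ : ℤ) : ℝ) *
        ∏ s, (w (n s) * v (n s) ^ ((σ s : ℕ) + (τ s : ℕ))))
      (((Equiv.Perm.sign σ : ℤ) : ℝ) * ((Equiv.Perm.sign τ : ℤ) : ℝ) *
        ∏ s, ∑' n, w n * v n ^ ((σ s : ℕ) + (τ s : ℕ))) := fun σ τ =>
    (hasSum_pi_prod N (fun s n => w n * v n ^ ((σ s : ℕ) + (τ s : ℕ)))
      (fun s n => mul_nonneg (hw n) (pow_nonneg (hv n) _)) (fun s => hs _)).mul_left _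
  have h2 := hasSum_sum (s := Finset.univ) fun σ _ =>
    hasSum_sum (s := Finset.univ) fun τ _ => h1 σ τ
  convert h2 using 1
  · funext n
    rw [sq, ← Matrix.det_transpose, Matrix.det_apply', Finset.sum_mul_sum, Finset.mul_sum]
    refine Finset.sum_congr rfl fun σ _ => ?_
    rw [Finset.mul_sum]
    refine Finset.sum_congr rfl fun τ _ => ?_
    simp only [Matrix.transpose_apply, Matrix.vandermonde_apply, pow_add, Finset.prod_mul_distrib]
    ring
  · have : ∀ σ : Equiv.Perm (Fin N), ∑ τ : Equiv.Perm (Fin N),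
        (((Equiv.Perm.sign σ : ℤ) : ℝ) * ((Equiv.Perm.sign τ : ℤ) : ℝ) *
        ∏ s, ∑' n, w n * v n ^ ((σ s : ℕ) + (τ s : ℕ))) =
        (Matrix.of fun i j : Fin N => ∑' n, w n * v n ^ ((i : ℕ) + (j : ℕ))).det := by
      intro σ
      have hp := Matrix.det_permute σ
        (Matrix.of fun i j : Fin N => ∑' n, w n * v n ^ ((i : ℕ) + (j : ℕ)))
      have hss : ((Equiv.Perm.sign σ : ℤ) : ℝ) * ((Equiv.Perm.sign σ : ℤ) : ℝ) = 1 := by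
        rw [← Int.cast_mul, Int.units_coe_mul_self]; simp
      rw [← one_mul (Matrix.det _), ← hss, mul_assoc, ← hp, ← Matrix.det_transpose,
        Matrix.det_apply', Finset.mul_sum]
      refine Finset.sum_congr rfl fun τ _ => ?_
      simp only [Matrix.transpose_apply, Matrix.submatrix_apply, Matrix.of_apply, id]
      ring
    simp only [this, Finset.sum_const, Finset.card_univ, Fintype.card_perm, Fintype.card_fin,
      nsmul_eq_mul]

noncomputable def ddv {N : ℕ} (α u : ℝ) (x : Fin N → ℝ) : Fin N → ℝ :=
  Matrix.mulVec (newtonL x)⁻¹ (fun i => phi α (u * x i))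

lemma ddv_spec {N : ℕ} (α u : ℝ) (x : Fin N → ℝ) (hx : Function.Injective x) (i : Fin N) :
    ∑ k, newtonL x i k * ddv α u x k = phi α (u * x i) := by
  have hdet : IsUnit (newtonL x).det := by
    rw [newtonL_det]; exact isUnit_iff_ne_zero.2 (vand_ne x hx)
  have : Matrix.mulVec (newtonL x) (ddv α u x) = fun i => phi α (u * x i) := by
    rw [ddv, Matrix.mulVec_mulVec, Matrix.mul_nonsing_inv _ hdet, Matrix.one_mulVec]
  exact congrFun this i

lemma ddv_mean {N : ℕ} (α : ℝ) (hα : -1 < α) (u : ℝ) (r : ℝ) (x : Fin N → ℝ)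
    (hx : Function.Injective x) (hm : ∀ i, x i ∈ Set.Icc 0 r) (k : Fin N) :
    ∃ ξ ∈ Set.Icc 0 r, ddv α u x k =
      u ^ (k : ℕ) * ((-1/4) ^ (k : ℕ) * phi (α + (k : ℕ)) (u * ξ)) / (Nat.factorial k : ℝ) := by
  refine dd_mean (fun j t => u ^ j * ((-1/4) ^ j * phi (α + j) (u * t))) ?_ 0 r x hx hm
    (ddv α u x) ?_ k
  · intro j t
    have h := phi_hasDerivAt (α + j) (by have : (0:ℝ) ≤ j := Nat.cast_nonneg j
                                         linarith) (u * t)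
    have h2 := h.comp t ((hasDerivAt_id t).const_mul u)
    refine ((h2.const_mul ((-1/4 : ℝ) ^ j)).const_mul (u ^ j)).congr_deriv ?_
    push_cast
    rw [← add_assoc]
    ring
  · intro i
    rw [ddv_spec α u x hx i]; simp

lemma ddv_bound (N : ℕ) (α : ℝ) (hα : -1 < α) :
    ∃ C : ℝ, 0 ≤ C ∧ ∀ (u : ℝ) (_ : 0 ≤ u) (x : Fin N → ℝ) (_ : Function.Injective x)
      (_ : ∀ i, x i ∈ Set.Icc 0 (1 : ℝ)) (k : Fin N),
      |ddv α u x k| ≤ C * (u ^ (k : ℕ) * (1 + u)) := by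
  have hk : ∀ k : Fin N, -1 < α + (k : ℕ) := fun k => by
    have : (0:ℝ) ≤ (k : ℕ) := Nat.cast_nonneg _
    linarith
  choose C hC hb using fun k : Fin N => phi_growth (α + (k : ℕ)) (hk k)
  refine ⟨∑ k, C k, Finset.sum_nonneg fun k _ => (hC k).le, fun u hu x hx hm k => ?_⟩
  obtain ⟨ξ, hξ, h⟩ := ddv_mean α hα u 1 x hx hm k
  rw [h]
  have h1 := hb k (u * ξ) (mul_nonneg hu hξ.1)
  have h2 : C k ≤ ∑ k, C k :=
    Finset.single_le_sum (f := C) (fun k _ => (hC k).le) (Finset.mem_univ k)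
  have h3 : |(-1/4 : ℝ)| ^ (k : ℕ) ≤ 1 := pow_le_one₀ (abs_nonneg _) (by norm_num [abs_of_neg])
  have hf : (1 : ℝ) ≤ (Nat.factorial k : ℝ) := by exact_mod_cast Nat.one_le_iff_ne_zero.2 (Nat.factorial_ne_zero _)
  have h5 : u * ξ ≤ u := mul_le_of_le_one_right hu hξ.2
  have huk : 0 ≤ u ^ (k : ℕ) := pow_nonneg hu _
  rw [abs_div, abs_mul, abs_mul, abs_pow, abs_pow, abs_of_nonneg hu, Nat.abs_cast]
  calc u ^ (k : ℕ) * (|(-1/4 : ℝ)| ^ (k : ℕ) * |phi (α + (k : ℕ)) (u * ξ)|) / (Nat.factorial k : ℝ)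
      ≤ u ^ (k : ℕ) * (|(-1/4 : ℝ)| ^ (k : ℕ) * |phi (α + (k : ℕ)) (u * ξ)|) :=
        div_le_self (by positivity) hf
    _ ≤ u ^ (k : ℕ) * (1 * ((∑ k, C k) * (1 + u))) := by
        gcongr
        refine h1.trans ?_
        have := hC k
        gcongr
        · exact add_nonneg zero_le_one (mul_nonneg hu hξ.1)
        · exact this.le.trans h2
    _ = _ := by ring

noncomputable def cc (α : ℝ) (k : ℕ) : ℝ :=
  (-1/4) ^ k * (Real.Gamma (α + k + 1))⁻¹ / (Nat.factorial k : ℝ)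

lemma ddv_tendsto {N : ℕ} (α : ℝ) (hα : -1 < α) (u : ℝ) (k : Fin N) :
    Tendsto (fun x : Fin N → ℝ => ddv α u x k)
      (nhdsWithin 0 {x | Function.Injective x ∧ ∀ i, 0 ≤ x i})
      (nhds (cc α k * u ^ (k : ℕ))) := by
  let G : ℝ → ℝ := fun ξ =>
    u ^ (k : ℕ) * ((-1/4) ^ (k : ℕ) * phi (α + (k : ℕ)) (u * ξ)) / (Nat.factorial k : ℝ)
  have hG0 : G 0 = cc α k * u ^ (k : ℕ) := by
    simp only [G, mul_zero, phi_zero, cc]; ring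
  have hGc : ContinuousAt G 0 := by
    have hk : -1 < α + (k : ℕ) := by
      have : (0:ℝ) ≤ (k : ℕ) := Nat.cast_nonneg _
      linarith
    have : Continuous (phi (α + (k : ℕ))) :=
      continuous_iff_continuousAt.2 fun t => (phi_hasDerivAt _ hk t).continuousAt
    apply Continuous.continuousAt
    fun_prop
  rw [← hG0, Metric.tendsto_nhds]
  intro ε hε
  obtain ⟨δ, hδ, h⟩ := Metric.continuousAt_iff.1 hGc ε hε
  have hball : Metric.ball (0 : Fin N → ℝ) δ ∈ nhdsWithin 0
      {x : Fin N → ℝ | Function.Injective x ∧ ∀ i, 0 ≤ x i} :=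
    mem_nhdsWithin_of_mem_nhds (Metric.ball_mem_nhds _ hδ)
  filter_upwards [hball, self_mem_nhdsWithin] with x hx hx2
  have hn : ‖x‖ < δ := by simpa using hx
  obtain ⟨ξ, hξ, he⟩ := ddv_mean α hα u ‖x‖ x hx2.1
    (fun i => ⟨hx2.2 i, (le_abs_self _).trans (norm_le_pi_norm x i)⟩) k
  rw [he]
  apply h
  rw [Real.dist_eq, sub_zero, abs_of_nonneg hξ.1]
  exact hξ.2.trans_lt hn

lemma det_factor {N : ℕ} (α : ℝ) (w u : ℕ → ℝ) (x y : Fin N → ℝ)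
    (hx : Function.Injective x) (hy : Function.Injective y)
    (hs : ∀ k l, Summable fun n => w n * (ddv α (u n) x k * ddv α (u n) y l)) :
    (Matrix.of fun i j : Fin N => ∑' n, w n * (phi α (u n * x i) * phi α (u n * y j))).det =
      vandermondeProd x * vandermondeProd y *
      (Matrix.of fun k l : Fin N => ∑' n, w n * (ddv α (u n) x k * ddv α (u n) y l)).det := by
  have : (Matrix.of fun i j : Fin N => ∑' n, w n * (phi α (u n * x i) * phi α (u n * y j))) =
      newtonL x * (Matrix.of fun k l : Fin N =>
        ∑' n, w n * (ddv α (u n) x k * ddv α (u n) y l)) * (newtonL y).transpose := by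
    ext i j
    rw [Matrix.mul_apply]
    simp only [Matrix.mul_apply, Matrix.of_apply, Matrix.transpose_apply]
    have h := hasSum_sum (s := Finset.univ) fun l _ =>
      (hasSum_sum (s := Finset.univ) fun k _ =>
        ((hs k l).hasSum.mul_left (newtonL x i k))).mul_right (newtonL y j l)
    rw [← h.tsum_eq]
    refine tsum_congr fun n => ?_
    rw [← ddv_spec α (u n) x hx i, ← ddv_spec α (u n) y hy j, Finset.sum_mul_sum,
      Finset.sum_comm, Finset.mul_sum]
    refine Finset.sum_congr rfl fun l _ => ?_
    rw [Finset.mul_sum, Finset.sum_mul]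
    refine Finset.sum_congr rfl fun k _ => ?_
    ring
  rw [this, Matrix.det_mul, Matrix.det_mul, Matrix.det_transpose, newtonL_det, newtonL_det]
  ring

lemma core (N : ℕ) (α : ℝ) (hα : -1 < α) (w u : ℕ → ℝ) (hw : ∀ n, 0 ≤ w n) (hu : ∀ n, 0 ≤ u n)
    (hs : ∀ k : ℕ, Summable fun n => w n * u n ^ k) :
    Tendsto (fun p : (Fin N → ℝ) × (Fin N → ℝ) =>
      (Matrix.of fun i j : Fin N => ∑' n, w n * (phi α (u n * p.1 i) * phi α (u n * p.2 j))).det /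
        (vandermondeProd p.1 * vandermondeProd p.2))
      (nhdsWithin (0, 0) {p | (Function.Injective p.1 ∧ ∀ i, 0 ≤ p.1 i) ∧
        (Function.Injective p.2 ∧ ∀ i, 0 ≤ p.2 i)})
      (nhds (Matrix.of fun k l : Fin N =>
        ∑' n, w n * ((cc α k * u n ^ (k : ℕ)) * (cc α l * u n ^ (l : ℕ)))).det) := by
  obtain ⟨C, hC0, hC⟩ := ddv_bound N α hα
  set S : Set ((Fin N → ℝ) × (Fin N → ℝ)) := {p | (Function.Injective p.1 ∧ ∀ i, 0 ≤ p.1 i) ∧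
        (Function.Injective p.2 ∧ ∀ i, 0 ≤ p.2 i)} with hS
  let B : Fin N → Fin N → ℕ → ℝ := fun k l n =>
    w n * ((C * (u n ^ (k : ℕ) * (1 + u n))) * (C * (u n ^ (l : ℕ) * (1 + u n))))
  have hB : ∀ k l, Summable (B k l) := by
    intro k l
    have := (((hs (k + l)).add ((hs (k + l + 1)).mul_left 2)).add (hs (k + l + 2))).mul_left (C ^ 2)
    refine this.congr fun n => ?_
    simp only [B]
    ring
  have hbd : ∀ p : (Fin N → ℝ) × (Fin N → ℝ), p ∈ S → ‖p‖ ≤ 1 → ∀ k l n,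
      ‖w n * (ddv α (u n) p.1 k * ddv α (u n) p.2 l)‖ ≤ B k l n := by
    intro p hp hn k l n
    have h1 := hC (u n) (hu n) p.1 hp.1.1 (fun i => ⟨hp.1.2 i, (le_abs_self _).trans
      ((norm_le_pi_norm p.1 i).trans ((norm_fst_le p).trans hn))⟩) k
    have h2 := hC (u n) (hu n) p.2 hp.2.1 (fun i => ⟨hp.2.2 i, (le_abs_self _).trans
      ((norm_le_pi_norm p.2 i).trans ((norm_snd_le p).trans hn))⟩) l
    rw [norm_mul, norm_mul, Real.norm_eq_abs, abs_of_nonneg (hw n)]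
    simp only [B, Real.norm_eq_abs]
    have := hw n
    have := hu n
    gcongr
  have hball : ∀ᶠ p in nhdsWithin (0, 0) S, ‖p‖ ≤ 1 := by
    have : Metric.ball (0 : (Fin N → ℝ) × (Fin N → ℝ)) 1 ∈ nhdsWithin (0, 0) S :=
      mem_nhdsWithin_of_mem_nhds (Metric.ball_mem_nhds _ one_pos)
    filter_upwards [this] with p hp
    exact (by simpa using hp : ‖p‖ < 1).le
  have hT1 : Tendsto (fun p : (Fin N → ℝ) × (Fin N → ℝ) => p.1) (nhdsWithin (0, 0) S)
      (nhdsWithin 0 {x | Function.Injective x ∧ ∀ i, 0 ≤ x i}) :=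
    tendsto_nhdsWithin_iff.2 ⟨(continuous_fst.tendsto' _ _ rfl).mono_left nhdsWithin_le_nhds,
      by filter_upwards [self_mem_nhdsWithin] with p hp using hp.1⟩
  have hT2 : Tendsto (fun p : (Fin N → ℝ) × (Fin N → ℝ) => p.2) (nhdsWithin (0, 0) S)
      (nhdsWithin 0 {x | Function.Injective x ∧ ∀ i, 0 ≤ x i}) :=
    tendsto_nhdsWithin_iff.2 ⟨(continuous_snd.tendsto' _ _ rfl).mono_left nhdsWithin_le_nhds,
      by filter_upwards [self_mem_nhdsWithin] with p hp using hp.2⟩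
  have hlim : Tendsto (fun p : (Fin N → ℝ) × (Fin N → ℝ) =>
      (Matrix.of fun k l : Fin N => ∑' n, w n * (ddv α (u n) p.1 k * ddv α (u n) p.2 l)).det)
      (nhdsWithin (0, 0) S)
      (nhds (Matrix.of fun k l : Fin N =>
        ∑' n, w n * ((cc α k * u n ^ (k : ℕ)) * (cc α l * u n ^ (l : ℕ)))).det) := by
    have hc : Continuous (fun A : Matrix (Fin N) (Fin N) ℝ => A.det) := continuous_id.matrix_det
    refine (hc.tendsto _).comp ?_
    refine tendsto_pi_nhds.2 fun k => tendsto_pi_nhds.2 fun l => ?_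
    simp only [Matrix.of_apply]
    refine tendsto_tsum_of_dominated_convergence (hB k l) ?_ ?_
    · intro n
      exact (((ddv_tendsto α hα (u n) k).comp hT1).mul
        ((ddv_tendsto α hα (u n) l).comp hT2)).const_mul _
    · filter_upwards [hball, self_mem_nhdsWithin] with p hp1 hp2 n
      exact hbd p hp2 hp1 k l n
  refine hlim.congr' ?_
  filter_upwards [hball, self_mem_nhdsWithin] with p hp1 hp2
  rw [det_factor α w u p.1 p.2 hp2.1.1 hp2.2.1 fun k l =>
    Summable.of_norm_bounded (hB k l) (hbd p hp2 hp1 k l)]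
  rw [mul_div_assoc, mul_comm, div_mul_cancel₀]
  exact mul_ne_zero (vand_ne _ hp2.1.1) (vand_ne _ hp2.2.1)

lemma besselJ_eq (α x : ℝ) (hx : 0 < x) : besselJ α x = (x / 2) ^ α * phi α (x ^ 2) := by
  unfold besselJ phi
  rw [← tsum_mul_left]
  refine tsum_congr fun k => ?_
  have h2 : 0 < x / 2 := by linarith
  rw [Real.rpow_add h2, Real.rpow_mul h2.le, Real.rpow_natCast, Real.rpow_two]
  have : (-1 / 4 : ℝ) ^ k * (x ^ 2) ^ k = (-1) ^ k * ((x / 2) ^ 2) ^ k := by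
    rw [← mul_pow, ← mul_pow]; congr 1; ring
  rw [this]
  ring

lemma entry_eq (α M z ρ x y : ℝ) (hM : 0 < M) (hz : 0 < z) (hx : 0 < x) (hy : 0 < y) :
    (2 / M ^ 2) * (y ^ (α + 1) / x ^ α) * besselJ α (z * x / M) * besselJ α (z * y / M) * ρ =
      ((2 / M ^ 2 * ((2 * M) ^ (2 * α))⁻¹) * y ^ (2 * α + 1)) *
      ((z ^ (2 * α) * ρ) * (phi α (z ^ 2 / M ^ 2 * x ^ 2) * phi α (z ^ 2 / M ^ 2 * y ^ 2))) := by
  rw [besselJ_eq α _ (by positivity), besselJ_eq α _ (by positivity)]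
  have e : ∀ t, 0 < t → (z * t / M / 2) ^ α = z ^ α * t ^ α / (2 * M) ^ α := by
    intro t ht
    rw [show z * t / M / 2 = z * t / (2 * M) by field_simp, Real.div_rpow (by positivity) (by positivity),
      Real.mul_rpow hz.le ht.le]
  have e2 : ∀ t : ℝ, 0 < t → t ^ (2 * α) = t ^ α * t ^ α := by
    intro t ht; rw [two_mul, Real.rpow_add ht]
  have e3 : ∀ t, (z * t / M) ^ 2 = z ^ 2 / M ^ 2 * t ^ 2 := by intro t; ring
  rw [e x hx, e y hy, e3, e3, Real.rpow_add hy, Real.rpow_add hy, e2 z hz, e2 y hy,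
    e2 (2 * M) (by positivity)]
  have := (Real.rpow_pos_of_pos hx α).ne'
  have := (Real.rpow_pos_of_pos (show 0 < 2 * M by positivity) α).ne'
  rw [Real.rpow_one]
  field_simp

lemma const_eq (α : ℝ) (hα : -1 < α) (M : ℝ) (hM : 0 < M) (N : ℕ) :
    ∏ k ∈ Finset.range N, ((2 / M ^ 2 * ((2 * M) ^ (2 * α))⁻¹) * (cc α k / (M ^ 2) ^ k) ^ 2) =
      ((2 : ℝ) ^ ((N : ℝ) * (2 * (N : ℝ) + 2 * α - 3)) *
          M ^ (2 * (N : ℝ) * ((N : ℝ) + α)) *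
          ∏ k ∈ Finset.range N,
            (Real.Gamma ((k : ℝ) + 1) ^ 2 * Real.Gamma ((k : ℝ) + 1 + α) ^ 2))⁻¹ := by
  induction N with
  | zero => simp
  | succ N ih =>
    rw [Finset.prod_range_succ, ih, Finset.prod_range_succ]
    have e1 : (2 : ℝ) ^ (((N + 1 : ℕ) : ℝ) * (2 * ((N + 1 : ℕ) : ℝ) + 2 * α - 3)) =
        (2 : ℝ) ^ ((N : ℝ) * (2 * (N : ℝ) + 2 * α - 3)) * (2 ^ (2 * α) * 2 ^ (4 * N) / 2) := by
      rw [← Real.rpow_natCast 2 (4 * N), ← Real.rpow_add two_pos,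
        ← Real.rpow_sub_one two_ne_zero, ← Real.rpow_add two_pos]
      congr 1; push_cast; ring
    have e2 : M ^ (2 * ((N + 1 : ℕ) : ℝ) * (((N + 1 : ℕ) : ℝ) + α)) =
        M ^ (2 * (N : ℝ) * ((N : ℝ) + α)) * (M ^ (2 * α) * M ^ (4 * N + 2)) := by
      rw [← Real.rpow_natCast M (4 * N + 2), ← Real.rpow_add hM, ← Real.rpow_add hM]
      congr 1; push_cast; ring
    have hg : Real.Gamma ((N : ℝ) + 1 + α) ≠ 0 := (Real.Gamma_pos_of_pos (by
      have : (0:ℝ) ≤ N := Nat.cast_nonneg _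
      linarith)).ne'
    rw [e1, e2, mul_inv, mul_inv, mul_inv, mul_inv, mul_inv, mul_inv, cc,
      show α + (N : ℝ) + 1 = (N : ℝ) + 1 + α by ring, Real.Gamma_nat_eq_factorial,
      Real.mul_rpow two_pos.le hM.le]
    have h16 : ((-1/4 : ℝ) ^ N) ^ 2 = (2 ^ (4 * N))⁻¹ := by
      rw [← pow_mul, mul_comm, pow_mul, pow_mul, ← inv_pow]; norm_num
    have hX := (Real.rpow_pos_of_pos hM (2 * α)).ne'
    have hY := (Real.rpow_pos_of_pos two_pos (2 * α)).ne'
    have hf : ((Nat.factorial N : ℕ) : ℝ) ≠ 0 := by positivity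
    rw [div_pow, div_pow, mul_pow, h16]
    have hM0 := hM.ne'
    have : (M : ℝ) ^ (4 * N + 2) = M ^ 2 * ((M ^ 2) ^ N) ^ 2 := by
      rw [← pow_mul, ← pow_mul]; ring
    rw [this]
    field_simp

lemma w_summable (α : ℝ) (z : ℕ → ℝ) (hzmono : StrictMono z) (hzpos : ∀ n, 0 < z n)
    (ρ : ℕ → ℝ) (hρpos : ∀ n, 0 < ρ n)
    (hsum : ∀ k : ℕ, Summable fun n : ℕ => z n ^ k * ρ n) (k : ℕ) :
    Summable fun n => (z n ^ (2 * α) * ρ n) * (z n ^ 2) ^ k := by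
  obtain ⟨m, hm⟩ := exists_nat_ge (2 * α)
  refine Summable.of_nonneg_of_le (fun n => ?_) (fun n => ?_)
    ((hsum (m + 2 * k)).mul_left (z 0 ^ (2 * α) / z 0 ^ m))
  · have := Real.rpow_pos_of_pos (hzpos n) (2 * α)
    have := hρpos n
    have := hzpos n
    positivity
  · have h0 := hzpos 0
    have hn := hzpos n
    have h1 : 1 ≤ z n / z 0 := (one_le_div h0).2 (hzmono.monotone (Nat.zero_le n))
    have h2 := Real.rpow_le_rpow_of_exponent_le h1 hm
    rw [Real.rpow_natCast, Real.div_rpow hn.le h0.le, div_pow,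
      div_le_iff₀ (Real.rpow_pos_of_pos h0 _)] at h2
    have hr := hρpos n
    calc z n ^ (2 * α) * ρ n * (z n ^ 2) ^ k
        ≤ (z n ^ m / z 0 ^ m * z 0 ^ (2 * α)) * ρ n * (z n ^ 2) ^ k := by gcongr
      _ = _ := by rw [pow_add, pow_mul]; ring

theorem stmt_16 (α : ℝ) (hα : -1 < α) (N : ℕ) (hN : 1 ≤ N) (M : ℝ) (hM : 0 < M)
    (z : ℕ → ℝ) (hzmono : StrictMono z) (hzpos : ∀ n, 0 < z n)
    (ρ : ℕ → ℝ) (hρpos : ∀ n, 0 < ρ n)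
    (hsum : ∀ k : ℕ, Summable fun n : ℕ => z n ^ k * ρ n) :
    (Summable fun n : Fin N → ℕ =>
      |(∏ s : Fin N, z (n s) ^ (2 * α) * ρ (n s)) *
        (vandermondeProd fun s : Fin N => z (n s) ^ 2) ^ 2|) ∧
    Filter.Tendsto
      (fun p : (Fin N → ℝ) × (Fin N → ℝ) =>
        (Matrix.of fun i j : Fin N =>
          ∑' n : ℕ, (2 / M ^ 2) * ((p.2 j) ^ (α + 1) / (p.1 i) ^ α) *
            besselJ α (z n * p.1 i / M) * besselJ α (z n * p.2 j / M) * ρ n).det /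
          ((∏ k : Fin N, (p.2 k) ^ (2 * α + 1)) *
            vandermondeProd (fun k : Fin N => (p.1 k) ^ 2) *
            vandermondeProd (fun k : Fin N => (p.2 k) ^ 2)))
      (nhdsWithin (0, 0)
        {p : (Fin N → ℝ) × (Fin N → ℝ) |
          (Function.Injective p.1 ∧ ∀ i, 0 < p.1 i) ∧
            (Function.Injective p.2 ∧ ∀ i, 0 < p.2 i)})
      (nhds (((Nat.factorial N : ℝ) *
          (2 : ℝ) ^ ((N : ℝ) * (2 * (N : ℝ) + 2 * α - 3)) *
          M ^ (2 * (N : ℝ) * ((N : ℝ) + α)) *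
          ∏ k : Fin N, (Real.Gamma ((k : ℕ) + 1) ^ 2 * Real.Gamma (((k : ℕ) + 1 : ℝ) + α) ^ 2))⁻¹ *
        ∑' n : Fin N → ℕ,
          (∏ s : Fin N, z (n s) ^ (2 * α) * ρ (n s)) *
            (vandermondeProd fun s : Fin N => z (n s) ^ 2) ^ 2)) := by
  have hs := w_summable α z hzmono hzpos ρ hρpos hsum
  have hw : ∀ n, 0 ≤ z n ^ (2 * α) * ρ n := fun n =>
    (mul_pos (Real.rpow_pos_of_pos (hzpos n) _) (hρpos n)).le
  have hA := andreief N (fun n => z n ^ (2 * α) * ρ n) (fun n => z n ^ 2) hw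
    (fun n => sq_nonneg _) hs
  simp only [← vand_eq_det] at hA
  refine ⟨?_, ?_⟩
  · refine hA.summable.congr fun n => ?_
    rw [abs_of_nonneg]
    exact mul_nonneg (Finset.prod_nonneg fun s _ => hw _) (sq_nonneg _)
  rw [hA.tsum_eq]
  have hcore := core N α hα (fun n => z n ^ (2 * α) * ρ n) (fun n => z n ^ 2 / M ^ 2) hw
    (fun n => by positivity) (fun k => by
      refine ((hs k).mul_left (((M ^ 2) ^ k)⁻¹)).congr fun n => ?_
      rw [div_pow]; ring)
  set κ : ℝ := 2 / M ^ 2 * ((2 * M) ^ (2 * α))⁻¹ with hκ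
  have hlimeq : κ ^ N * (Matrix.of fun k l : Fin N =>
        ∑' n, (z n ^ (2 * α) * ρ n) * ((cc α k * (z n ^ 2 / M ^ 2) ^ (k : ℕ)) *
          (cc α l * (z n ^ 2 / M ^ 2) ^ (l : ℕ)))).det =
      ((Nat.factorial N : ℝ) *
          (2 : ℝ) ^ ((N : ℝ) * (2 * (N : ℝ) + 2 * α - 3)) *
          M ^ (2 * (N : ℝ) * ((N : ℝ) + α)) *
          ∏ k : Fin N, (Real.Gamma ((k : ℕ) + 1) ^ 2 * Real.Gamma (((k : ℕ) + 1 : ℝ) + α) ^ 2))⁻¹ *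
        ((Nat.factorial N : ℝ) * (Matrix.of fun i j : Fin N =>
          ∑' n, z n ^ (2 * α) * ρ n * (z n ^ 2) ^ ((i : ℕ) + (j : ℕ))).det) := by
    have h1 : (Matrix.of fun k l : Fin N =>
        ∑' n, (z n ^ (2 * α) * ρ n) * ((cc α k * (z n ^ 2 / M ^ 2) ^ (k : ℕ)) *
          (cc α l * (z n ^ 2 / M ^ 2) ^ (l : ℕ)))) =
        Matrix.of fun k l : Fin N => (cc α k / (M ^ 2) ^ (k : ℕ)) *
          (Matrix.of fun k l : Fin N => (cc α l / (M ^ 2) ^ (l : ℕ)) *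
            (Matrix.of fun i j : Fin N =>
          ∑' n, z n ^ (2 * α) * ρ n * (z n ^ 2) ^ ((i : ℕ) + (j : ℕ))) k l) k l := by
      ext k l
      simp only [Matrix.of_apply]
      rw [← tsum_mul_left, ← tsum_mul_left]
      refine tsum_congr fun n => ?_
      rw [pow_add, div_pow, div_pow]; ring
    rw [h1, Matrix.det_mul_column, Matrix.det_mul_row]
    have hc := const_eq α hα M hM N
    rw [Finset.prod_mul_distrib, Finset.prod_const, Finset.card_range, Finset.prod_pow,
      ← hκ, ← Fin.prod_univ_eq_prod_range, ← Fin.prod_univ_eq_prod_range] at hc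
    have hf : ((Nat.factorial N : ℕ) : ℝ) ≠ 0 := by positivity
    rw [mul_assoc (Nat.factorial N : ℝ), mul_assoc (Nat.factorial N : ℝ), mul_inv, ← hc]
    field_simp
  rw [← hlimeq]
  have hT : Tendsto (fun p : (Fin N → ℝ) × (Fin N → ℝ) =>
      ((fun k => p.1 k ^ 2, fun k => p.2 k ^ 2) : (Fin N → ℝ) × (Fin N → ℝ)))
      (nhdsWithin (0, 0)
        {p : (Fin N → ℝ) × (Fin N → ℝ) |
          (Function.Injective p.1 ∧ ∀ i, 0 < p.1 i) ∧
            (Function.Injective p.2 ∧ ∀ i, 0 < p.2 i)})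
      (nhdsWithin (0, 0) {p | (Function.Injective p.1 ∧ ∀ i, 0 ≤ p.1 i) ∧
        (Function.Injective p.2 ∧ ∀ i, 0 ≤ p.2 i)}) := by
    have hinj : ∀ x : Fin N → ℝ, Function.Injective x → (∀ i, 0 < x i) →
        Function.Injective (fun k => x k ^ 2) := by
      intro x hx hp i j hij
      exact hx ((pow_left_inj₀ (hp i).le (hp j).le two_ne_zero).1 hij)
    refine tendsto_nhdsWithin_iff.2 ⟨?_, ?_⟩
    · refine Tendsto.mono_left ?_ nhdsWithin_le_nhds
      refine Continuous.tendsto' (by fun_prop) _ _ ?_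
      ext <;> simp
    · filter_upwards [self_mem_nhdsWithin] with p hp
      exact ⟨⟨hinj _ hp.1.1 hp.1.2, fun i => sq_nonneg _⟩,
        ⟨hinj _ hp.2.1 hp.2.2, fun i => sq_nonneg _⟩⟩
  refine ((hcore.comp hT).const_mul (κ ^ N)).congr' ?_
  filter_upwards [self_mem_nhdsWithin] with p hp
  have h2 : (Matrix.of fun i j : Fin N =>
          ∑' n : ℕ, (2 / M ^ 2) * ((p.2 j) ^ (α + 1) / (p.1 i) ^ α) *
            besselJ α (z n * p.1 i / M) * besselJ α (z n * p.2 j / M) * ρ n) =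
      Matrix.of fun i j : Fin N => (κ * p.2 j ^ (2 * α + 1)) *
        (Matrix.of fun i j : Fin N => ∑' n, (z n ^ (2 * α) * ρ n) *
          (phi α (z n ^ 2 / M ^ 2 * p.1 i ^ 2) * phi α (z n ^ 2 / M ^ 2 * p.2 j ^ 2))) i j := by
    ext i j
    simp only [Matrix.of_apply]
    rw [← tsum_mul_left]
    exact tsum_congr fun n => entry_eq α M (z n) (ρ n) _ _ hM (hzpos n) (hp.1.2 i) (hp.2.2 j)
  rw [h2, Matrix.det_mul_row, Finset.prod_mul_distrib, Finset.prod_const, Finset.card_univ,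
    Fintype.card_fin]
  have h3 : ∏ k : Fin N, p.2 k ^ (2 * α + 1) ≠ 0 :=
    Finset.prod_ne_zero_iff.2 fun k _ => (Real.rpow_pos_of_pos (hp.2.2 k) _).ne'
  simp only [Function.comp]
  rw [mul_assoc (∏ k : Fin N, p.2 k ^ (2 * α + 1)), mul_comm (κ ^ N) (∏ k : Fin N, _),
    mul_assoc, mul_div_mul_left _ _ h3, mul_div_assoc]
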